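/- arXiv:1604.03897 — 2 statements merged into one kernel-verified Lean document; each statement's English description precedes it below -/
import Mathlib

section
/- Vanishing locus of the section s_v: given a Q-polarized Hodge structure z of even weight w on V and v ∈ V, let v_z := Σ_{p > w/2} v^{p,q} (the sum of the components of v in the V^{p,q} with p > w/2) and h_z(v) := 2·Q(C v_z, conj(v_z)). Then h_z(v) ≥ 0, with equality if and only if v ∈ V^{w/2,w/2}; moreover, if v ≠ 0 and v ∈ V^{w/2,w/2}, then Q(v,v) > 0. -/
noncomputable section

/-- Data exhibiting the complex vector space `W` as the complexification `V_ℂ` of the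
real vector space `V`: a real embedding `ι`, and a complex conjugation `conj` (a
real-linear, antilinear involution) whose fixed points are exactly `ι(V)`, with
`W = ι(V) ⊕ i·ι(V)`. -/
structure Complexification (V W : Type*) [AddCommGroup V] [Module ℝ V]
    [AddCommGroup W] [Module ℂ W] where
  ι : V →ₗ[ℝ] W
  conj : W →ₗ[ℝ] W
  conj_conj : ∀ x, conj (conj x) = x
  conj_smul : ∀ (a : ℂ) (x : W), conj (a • x) = (starRingEnd ℂ a) • conj x
  conj_ι : ∀ v, conj (ι v) = ι v
  ι_injective : Function.Injective ι
  exists_re_im : ∀ x : W, ∃ v₁ v₂ : V, x = ι v₁ + Complex.I • ι v₂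
  fixed_eq_range : ∀ x : W, conj x = x → ∃ v, x = ι v

/-- A `Q`-polarized Hodge structure of weight `w` on `V`, presented as the family of
Hodge subspaces `Vpq p = V^{p,w-p}` of the complexification `W = V_ℂ`:
`W = ⊕_{p+q=w} V^{p,q}`, conjugation maps `V^{p,q}` into `V^{q,p}`,
`Q(V^{p,q},V^{p',q'}) = 0` unless `p' = w − p`, and `i^{p−q}·Q(u, conj u) > 0` for
`0 ≠ u ∈ V^{p,q}` (here `i^{p-q} = i^p·(−i)^q`). -/
structure IsPolarizedHodgeStructure {V W : Type*} [AddCommGroup V] [Module ℝ V]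
    [AddCommGroup W] [Module ℂ W] (c : Complexification V W)
    (QC : W →ₗ[ℂ] W →ₗ[ℂ] ℂ) (w : ℕ) (Vpq : ℕ → Submodule ℂ W) : Prop where
  isInternal : DirectSum.IsInternal fun p : Fin (w + 1) => Vpq (p : ℕ)
  bot_of_gt : ∀ p, w < p → Vpq p = ⊥
  conj_mem : ∀ p, ∀ x ∈ Vpq p, c.conj x ∈ Vpq (w - p)
  isotropic : ∀ p p', p + p' ≠ w → ∀ x ∈ Vpq p, ∀ y ∈ Vpq p', QC x y = 0
  positivity : ∀ p, ∀ x ∈ Vpq p, x ≠ 0 →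
    ∃ r : ℝ, 0 < r ∧ (Complex.I ^ p * (-Complex.I) ^ (w - p)) * QC x (c.conj x) = (r : ℂ)


namespace IsPolarizedHodgeStructure

variable {V W : Type*} [AddCommGroup V] [Module ℝ V] [AddCommGroup W] [Module ℂ W]
  {c : Complexification V W} {QC : W →ₗ[ℂ] W →ₗ[ℂ] ℂ} {w : ℕ} {Vpq : ℕ → Submodule ℂ W}

/-- Distinct Hodge subspaces are orthogonal for the Hermitian form `Q(x, conj y)`. -/
lemma apply_conj_eq_zero (hz : IsPolarizedHodgeStructure c QC w Vpq) {p q : ℕ} (hq : q ≤ w)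
    (hpq : p ≠ q) {x y : W} (hx : x ∈ Vpq p) (hy : y ∈ Vpq q) : QC x (c.conj y) = 0 :=
  hz.isotropic p (w - q) (by omega) x hx _ (hz.conj_mem q y hy)

lemma eq_zero_of_apply_conj_self (hz : IsPolarizedHodgeStructure c QC w Vpq) {p : ℕ} {x : W}
    (hx : x ∈ Vpq p) (h : QC x (c.conj x) = 0) : x = 0 := by
  by_contra hne
  obtain ⟨r, hr, hr'⟩ := hz.positivity p x hx hne
  rw [h, mul_zero] at hr'
  exact hr.ne (by exact_mod_cast hr')

/-- Pairing a sum of Hodge components with the conjugate of a vector of type `(q, w - q)`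
picks out the component of that type. -/
lemma sum_apply_conj (hz : IsPolarizedHodgeStructure c QC w Vpq) {s : Finset ℕ} {a : ℕ → W}
    (ha : ∀ p, a p ∈ Vpq p) {q : ℕ} (hqs : q ∈ s) (hq : q ≤ w) {y : W} (hy : y ∈ Vpq q) :
    QC (∑ p ∈ s, a p) (c.conj y) = QC (a q) (c.conj y) := by
  rw [map_sum, LinearMap.sum_apply]
  exact Finset.sum_eq_single_of_mem q hqs fun p _ hpq => hz.apply_conj_eq_zero hq hpq (ha p) hy

/-- Hodge components are unique. -/
lemma eq_of_sum_eq (hz : IsPolarizedHodgeStructure c QC w Vpq) {a b : ℕ → W}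
    (ha : ∀ p, a p ∈ Vpq p) (hb : ∀ p, b p ∈ Vpq p)
    (h : ∑ p ∈ Finset.range (w + 1), a p = ∑ p ∈ Finset.range (w + 1), b p) {q : ℕ}
    (hq : q ≤ w) : a q = b q := by
  have hd : ∀ p, a p - b p ∈ Vpq p := fun p => sub_mem (ha p) (hb p)
  refine sub_eq_zero.mp (hz.eq_zero_of_apply_conj_self (hd q) ?_)
  rw [← hz.sum_apply_conj (s := Finset.range (w + 1)) hd (Finset.mem_range.mpr (by omega))
      hq (hd q),
    Finset.sum_sub_distrib, h, sub_self, map_zero, LinearMap.zero_apply]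

/-- The Hodge components of a real vector are exchanged by conjugation. -/
lemma conj_component (hz : IsPolarizedHodgeStructure c QC w Vpq) {v : V} {a : ℕ → W}
    (ha : ∀ p, a p ∈ Vpq p) (hv : c.ι v = ∑ p ∈ Finset.range (w + 1), a p) {q : ℕ}
    (hq : q ≤ w) : a q = c.conj (a (w - q)) := by
  have hmem : ∀ p, (if p ≤ w then c.conj (a (w - p)) else 0) ∈ Vpq p := by
    intro p
    split_ifs with hp
    · simpa [Nat.sub_sub_self hp] using hz.conj_mem (w - p) _ (ha (w - p))
    · exact zero_mem _
  have hsum : ∑ p ∈ Finset.range (w + 1), a p =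
      ∑ p ∈ Finset.range (w + 1), if p ≤ w then c.conj (a (w - p)) else 0 := by
    rw [← hv, ← c.conj_ι v, hv, map_sum, ← Finset.sum_range_reflect]
    refine Finset.sum_congr rfl fun p hp => ?_
    rw [if_pos (Nat.lt_succ_iff.mp (Finset.mem_range.mp hp)), Nat.add_sub_cancel]
  simpa [hq] using hz.eq_of_sum_eq ha hmem hsum hq

/-- A real vector is of type `(w/2, w/2)` iff its components with `p > w/2` vanish. -/
lemma mem_middle_iff (hz : IsPolarizedHodgeStructure c QC w Vpq) (hw : Even w) {v : V}
    {a : ℕ → W} (ha : ∀ p, a p ∈ Vpq p) (hv : c.ι v = ∑ p ∈ Finset.range (w + 1), a p) :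
    c.ι v ∈ Vpq (w / 2) ↔ ∀ p ∈ Finset.Ioc (w / 2) w, a p = 0 := by
  constructor
  · intro hmem p hp
    rw [Finset.mem_Ioc] at hp
    refine hz.eq_zero_of_apply_conj_self (ha p) ?_
    rw [← hz.sum_apply_conj (s := Finset.range (w + 1)) ha (Finset.mem_range.mpr (by omega))
      hp.2 (ha p), ← hv]
    exact hz.apply_conj_eq_zero hp.2 hp.1.ne hmem (ha p)
  · intro h
    rw [hv, Finset.sum_eq_single_of_mem (w / 2) (Finset.mem_range.mpr (by omega))]
    · exact ha _
    · intro p hp hne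
      obtain ⟨k, rfl⟩ := hw
      rw [Finset.mem_range] at hp
      by_cases hlt : (k + k) / 2 < p
      · exact h p (Finset.mem_Ioc.mpr ⟨hlt, by omega⟩)
      · rw [hz.conj_component ha hv (by omega),
          h (k + k - p) (Finset.mem_Ioc.mpr ⟨by omega, by omega⟩), map_zero]

/-- The Weil form on a sum of Hodge components is a sum of nonnegative reals, which vanishes
only if all the components do. -/
lemma exists_weil_form_eq (hz : IsPolarizedHodgeStructure c QC w Vpq) {C : W →ₗ[ℂ] W}
    (hC : ∀ p, ∀ x ∈ Vpq p, C x = (Complex.I ^ p * (-Complex.I) ^ (w - p)) • x)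
    {s : Finset ℕ} (hs : ∀ p ∈ s, p ≤ w) {a : ℕ → W} (ha : ∀ p, a p ∈ Vpq p) :
    ∃ r : ℝ, QC (C (∑ p ∈ s, a p)) (c.conj (∑ p ∈ s, a p)) = (r : ℂ) ∧
      0 ≤ r ∧ (r = 0 ↔ ∀ p ∈ s, a p = 0) := by
  have hCa : ∀ p, C (a p) ∈ Vpq p := fun p => hC p _ (ha p) ▸ Submodule.smul_mem _ _ (ha p)
  have key : ∀ p, ∃ r : ℝ, QC (C (a p)) (c.conj (a p)) = (r : ℂ) ∧ 0 ≤ r ∧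
      (r = 0 ↔ a p = 0) := by
    intro p
    by_cases h0 : a p = 0
    · exact ⟨0, by simp [h0]⟩
    · obtain ⟨r, hr, hr'⟩ := hz.positivity p _ (ha p) h0
      refine ⟨r, ?_, hr.le, by simp [hr.ne', h0]⟩
      rw [hC p _ (ha p), map_smul, LinearMap.smul_apply, smul_eq_mul, hr']
  choose r hr hr0 hriff using key
  refine ⟨∑ p ∈ s, r p, ?_, Finset.sum_nonneg fun p _ => hr0 p, ?_⟩
  · rw [map_sum c.conj, map_sum, map_sum, Complex.ofReal_sum]
    refine Finset.sum_congr rfl fun q hq => ?_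
    rw [hz.sum_apply_conj hCa hq (hs q hq) (ha q), hr]
  · rw [Finset.sum_eq_zero_iff_of_nonneg fun p _ => hr0 p]
    simp only [hriff]

end IsPolarizedHodgeStructure

/-- **Vanishing locus of the section `s_v`.** Given a `Q`-polarized Hodge structure `z`
of even weight `w` on `V` with Weil operator `C`, and `v ∈ V` with Hodge components
`comp p ∈ V^{p,w-p}`, set `v_z = Σ_{p > w/2} comp p` and `h_z(v) = 2·Q(C v_z, conj v_z)`.
Then `h_z(v)` is real, `h_z(v) ≥ 0`, with equality iff `v ∈ V^{w/2,w/2}`; moreover if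
`v ≠ 0` lies in `V^{w/2,w/2}` then `Q(v,v) > 0`. -/
theorem vanishing_locus_s_v
    {V W : Type*} [AddCommGroup V] [Module ℝ V] [FiniteDimensional ℝ V]
    [AddCommGroup W] [Module ℂ W]
    (c : Complexification V W)
    (Q : LinearMap.BilinForm ℝ V) (hQsymm : ∀ u v, Q u v = Q v u)
    (hQnd : Q.Nondegenerate)
    (QC : W →ₗ[ℂ] W →ₗ[ℂ] ℂ) (hQC : ∀ u v : V, QC (c.ι u) (c.ι v) = (Q u v : ℂ))
    (w : ℕ) (hw : 0 < w) (hweven : Even w)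
    (Vpq : ℕ → Submodule ℂ W)
    (hz : IsPolarizedHodgeStructure c QC w Vpq)
    (C : W →ₗ[ℂ] W)
    (hC : ∀ p, ∀ x ∈ Vpq p, C x = (Complex.I ^ p * (-Complex.I) ^ (w - p)) • x) :
    ∀ v : V, ∀ comp : ℕ → W,
      (∀ p, comp p ∈ Vpq p) →
      c.ι v = ∑ p ∈ Finset.range (w + 1), comp p →
      (∃ r : ℝ,
        2 * QC (C (∑ p ∈ Finset.Ioc (w / 2) w, comp p))
            (c.conj (∑ p ∈ Finset.Ioc (w / 2) w, comp p)) = (r : ℂ) ∧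
        0 ≤ r ∧ (r = 0 ↔ c.ι v ∈ Vpq (w / 2))) ∧
      (v ≠ 0 → c.ι v ∈ Vpq (w / 2) → 0 < Q v v) := by
  intro v comp hcomp hv
  refine ⟨?_, ?_⟩
  · obtain ⟨r, hr, hr0, hriff⟩ := hz.exists_weil_form_eq hC
      (s := Finset.Ioc (w / 2) w) (fun p hp => (Finset.mem_Ioc.mp hp).2) hcomp
    refine ⟨2 * r, by rw [hr]; push_cast; rfl, by positivity, ?_⟩
    rw [hz.mem_middle_iff hweven hcomp hv, ← hriff]
    simp
  · intro hv0 hmem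
    obtain ⟨r, hr, hr'⟩ := hz.positivity _ _ hmem
      ((map_ne_zero_iff c.ι c.ι_injective).mpr hv0)
    obtain ⟨k, rfl⟩ := hweven
    rw [show k + k - (k + k) / 2 = (k + k) / 2 by omega, ← mul_pow, mul_neg, Complex.I_mul_I,
      neg_neg, one_pow, one_mul, c.conj_ι, hQC] at hr'
    rwa [Complex.ofReal_injective hr']
end
end

section
/- Transitivity on the Hodge locus of a vector: let v ∈ V with Q(v,v) > 0 and let G_v = {g ∈ O(V,Q) : gv = v}. Then G_v acts transitively on the set of Q-polarized Hodge structures of even weight w and fixed type h on V for which v ∈ V^{w/2,w/2}: for any two such Hodge structures there exists g ∈ G_v whose ℂ-linear extension maps the Hodge subspaces of the first onto the corresponding Hodge subspaces of the second. -/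
noncomputable section

theorem exists_linearEquiv_inner_eq {𝕜 E F : Type*} [RCLike 𝕜]
    [AddCommGroup E] [Module 𝕜 E] [FiniteDimensional 𝕜 E]
    [AddCommGroup F] [Module 𝕜 F] [FiniteDimensional 𝕜 F]
    (cE : InnerProductSpace.Core 𝕜 E) (cF : InnerProductSpace.Core 𝕜 F)
    (h : Module.finrank 𝕜 E = Module.finrank 𝕜 F) :
    ∃ f : E ≃ₗ[𝕜] F, ∀ x y, cF.inner (f x) (f y) = cE.inner x y := by
  let : NormedAddCommGroup E := cE.toNormedAddCommGroup
  let : InnerProductSpace 𝕜 E := InnerProductSpace.ofCore cE.toCore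
  let : NormedAddCommGroup F := cF.toNormedAddCommGroup
  let : InnerProductSpace 𝕜 F := InnerProductSpace.ofCore cF.toCore
  let f : E ≃ₗᵢ[𝕜] F :=
    (stdOrthonormalBasis 𝕜 E).equiv (stdOrthonormalBasis 𝕜 F) (finCongr h)
  exact ⟨f.toLinearEquiv, fun x y => f.inner_map_map x y⟩

theorem exists_linearEquiv_inner_eq_of_apply_eq {E F : Type*}
    [AddCommGroup E] [Module ℝ E] [FiniteDimensional ℝ E]
    [AddCommGroup F] [Module ℝ F] [FiniteDimensional ℝ F]
    (cE : InnerProductSpace.Core ℝ E) (cF : InnerProductSpace.Core ℝ F)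
    (h : Module.finrank ℝ E = Module.finrank ℝ F)
    (e : E) (e' : F) (he : cE.inner e e = cF.inner e' e') :
    ∃ f : E ≃ₗ[ℝ] F, (∀ x y, cF.inner (f x) (f y) = cE.inner x y) ∧ f e = e' := by
  obtain ⟨f, hf⟩ := exists_linearEquiv_inner_eq cE cF h
  let : NormedAddCommGroup F := cF.toNormedAddCommGroup
  let : InnerProductSpace ℝ F := InnerProductSpace.ofCore cF.toCore
  have hn : ‖f e‖ = ‖e'‖ := by
    have : inner ℝ (f e) (f e) = inner ℝ e' e' := (hf e e).trans he
    rw [real_inner_self_eq_norm_sq, real_inner_self_eq_norm_sq] at this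
    exact (sq_eq_sq₀ (norm_nonneg _) (norm_nonneg _)).1 this
  let r := (Submodule.span ℝ {f e - e'})ᗮ.reflection
  exact ⟨f.trans r.toLinearEquiv,
    fun x y => (r.inner_map_map (f x) (f y)).trans (hf x y), Submodule.reflection_sub hn⟩

namespace Complexification

variable {V W : Type*} [AddCommGroup V] [Module ℝ V] [AddCommGroup W] [Module ℂ W]
  (c : Complexification V W)

theorem conj_ι_add_I_smul_ι (a b : V) :
    c.conj (c.ι a + Complex.I • c.ι b) = c.ι a - Complex.I • c.ι b := by
  rw [map_add, c.conj_smul, c.conj_ι, c.conj_ι, Complex.conj_I, neg_smul, sub_eq_add_neg]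

theorem eq_zero_of_ι_add_I_smul_ι_eq_zero {a b : V}
    (h : c.ι a + Complex.I • c.ι b = 0) : a = 0 ∧ b = 0 := by
  have h' := c.conj_ι_add_I_smul_ι a b
  rw [h, map_zero] at h'
  have ha : c.ι a = 0 := by
    have h₂ : (2 : ℂ) • c.ι a = 0 := by
      rw [← sub_eq_zero.1 h'.symm] at h
      rwa [two_smul]
    exact (smul_eq_zero.1 h₂).resolve_left two_ne_zero
  rw [ha, zero_add] at h
  exact ⟨c.ι_injective (ha.trans (map_zero _).symm), c.ι_injective
    (((smul_eq_zero.1 h).resolve_left Complex.I_ne_zero).trans (map_zero _).symm)⟩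

/-- The real-linear map `(a, b) ↦ a + i b`. -/
def ofReIm : V × V →ₗ[ℝ] W where
  toFun u := c.ι u.1 + Complex.I • c.ι u.2
  map_add' u u' := by simp only [Prod.fst_add, Prod.snd_add, map_add, smul_add]; abel
  map_smul' r u := by
    simp only [Prod.smul_fst, Prod.smul_snd, map_smul, smul_add, RingHom.id_apply]
    rw [smul_comm]

theorem ofReIm_injective : Function.Injective c.ofReIm := by
  rw [← LinearMap.ker_eq_bot, LinearMap.ker_eq_bot']
  intro u hu
  have := c.eq_zero_of_ι_add_I_smul_ι_eq_zero hu
  exact Prod.ext this.1 this.2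

theorem ofReIm_surjective : Function.Surjective c.ofReIm := fun x => by
  obtain ⟨a, b, rfl⟩ := c.exists_re_im x
  exact ⟨(a, b), rfl⟩

theorem finiteDimensional {V W : Type*} [AddCommGroup V] [Module ℝ V] [FiniteDimensional ℝ V]
    [AddCommGroup W] [Module ℂ W] (c : Complexification V W) : FiniteDimensional ℂ W :=
  have : Module.Finite ℝ W := Module.Finite.of_surjective c.ofReIm c.ofReIm_surjective
  Module.Finite.of_restrictScalars_finite ℝ ℂ W

/-- A real-linear endomorphism of `V` extends to a complex-linear endomorphism of `V_ℂ`
commuting with conjugation. -/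
theorem exists_extend (f : V →ₗ[ℝ] V) :
    ∃ F : W →ₗ[ℂ] W, (∀ u, F (c.ι u) = c.ι (f u)) ∧ ∀ x, F (c.conj x) = c.conj (F x) := by
  let e := LinearEquiv.ofBijective c.ofReIm ⟨c.ofReIm_injective, c.ofReIm_surjective⟩
  let F₀ : W →ₗ[ℝ] W := c.ofReIm ∘ₗ f.prodMap f ∘ₗ e.symm.toLinearMap
  have hF₀ : ∀ a b, F₀ (c.ι a + Complex.I • c.ι b) = c.ι (f a) + Complex.I • c.ι (f b) := by
    intro a b
    have : e.symm (c.ι a + Complex.I • c.ι b) = (a, b) := (LinearEquiv.symm_apply_eq e).2 rfl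
    change c.ofReIm (f.prodMap f (e.symm _)) = _
    rw [this]
    rfl
  have hI : ∀ x, F₀ (Complex.I • x) = Complex.I • F₀ x := by
    intro x
    obtain ⟨a, b, rfl⟩ := c.exists_re_im x
    have h : ∀ a b : V, Complex.I • (c.ι a + Complex.I • c.ι b) =
        c.ι (-b) + Complex.I • c.ι a := by
      intro a b
      rw [smul_add, smul_smul, Complex.I_mul_I, neg_one_smul, map_neg, add_comm]
    rw [h, hF₀, hF₀, h, map_neg]
  refine ⟨{ F₀ with map_smul' := ?_ }, ?_, ?_⟩
  · intro z x
    change F₀ (z • x) = z • F₀ x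
    have hr : ∀ (r : ℝ) (y : W), (r : ℂ) • y = r • y := fun _ _ => rfl
    rw [← Complex.re_add_im z, mul_comm, add_smul, add_smul, mul_smul, mul_smul, map_add, hI,
      hr, hr, hr, hr, map_smul, map_smul]
  · intro u
    change F₀ _ = _
    simpa using hF₀ u 0
  · intro x
    change F₀ _ = c.conj (F₀ _)
    obtain ⟨a, b, rfl⟩ := c.exists_re_im x
    rw [hF₀, c.conj_ι_add_I_smul_ι, c.conj_ι_add_I_smul_ι]
    simpa [sub_eq_add_neg] using hF₀ a (-b)

/-- The conjugate `x ↦ conj (f (conj x))` of a complex-linear endomorphism. -/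
def conjEnd (f : W →ₗ[ℂ] W) : W →ₗ[ℂ] W where
  toFun x := c.conj (f (c.conj x))
  map_add' x y := by simp only [map_add]
  map_smul' z x := by simp only [c.conj_smul, map_smul, Complex.conj_conj, RingHom.id_apply]

variable {c} {Q : LinearMap.BilinForm ℝ V} {QC : W →ₗ[ℂ] W →ₗ[ℂ] ℂ}

theorem symm_of_real (hQsymm : ∀ u v, Q u v = Q v u)
    (hQC : ∀ u v : V, QC (c.ι u) (c.ι v) = (Q u v : ℂ)) (x y : W) : QC x y = QC y x := by
  obtain ⟨a, b, rfl⟩ := c.exists_re_im x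
  obtain ⟨a', b', rfl⟩ := c.exists_re_im y
  simp only [map_add, map_smul, LinearMap.add_apply, LinearMap.smul_apply, hQC, smul_eq_mul,
    hQsymm a' a, hQsymm a' b, hQsymm b' a, hQsymm b' b]
  ring

theorem conj_apply_apply_of_real (hQC : ∀ u v : V, QC (c.ι u) (c.ι v) = (Q u v : ℂ)) (x y : W) :
    QC (c.conj x) (c.conj y) = starRingEnd ℂ (QC x y) := by
  obtain ⟨a, b, rfl⟩ := c.exists_re_im x
  obtain ⟨a', b', rfl⟩ := c.exists_re_im y
  rw [conj_ι_add_I_smul_ι, conj_ι_add_I_smul_ι]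
  simp only [map_add, map_sub, map_smul, LinearMap.add_apply,
    LinearMap.sub_apply, LinearMap.smul_apply, hQC, smul_eq_mul, map_mul, Complex.conj_I,
    Complex.conj_ofReal]
  ring

end Complexification

/-- A linear map out of an internal direct sum can be prescribed on each summand. -/
theorem DirectSum.IsInternal.exists_linearMap_eq {ι R M N : Type*} [DecidableEq ι] [Semiring R]
    [AddCommMonoid M] [Module R M] [AddCommMonoid N] [Module R N] {A : ι → Submodule R M}
    (hA : DirectSum.IsInternal A) (f : ι → M →ₗ[R] N) :
    ∃ F : M →ₗ[R] N, ∀ i, ∀ x ∈ A i, F x = f i x := by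
  let e := LinearEquiv.ofBijective (DirectSum.coeLinearMap A) hA
  refine ⟨DirectSum.toModule R ι N (fun i => f i ∘ₗ (A i).subtype) ∘ₗ e.symm.toLinearMap, ?_⟩
  intro i x hx
  have : e.symm x = DirectSum.lof R ι (fun i => A i) i ⟨x, hx⟩ := by
    rw [LinearEquiv.symm_apply_eq]
    exact (DirectSum.coeLinearMap_lof A i ⟨x, hx⟩).symm
  simp [this]

namespace Complexification

variable {V W : Type*} [AddCommGroup V] [Module ℝ V] [AddCommGroup W] [Module ℂ W]
  (c : Complexification V W)

/-- The real points of a complex subspace of `V_ℂ`. -/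
def realPoints (A : Submodule ℂ W) : Submodule ℝ V :=
  (A.restrictScalars ℝ).comap c.ι

variable {c}

@[simp]
theorem mem_realPoints {A : Submodule ℂ W} {u : V} : u ∈ c.realPoints A ↔ c.ι u ∈ A :=
  Iff.rfl

theorem exists_mem_realPoints {A : Submodule ℂ W} (hA : ∀ x ∈ A, c.conj x ∈ A) {x : W}
    (hx : x ∈ A) :
    ∃ a ∈ c.realPoints A, ∃ b ∈ c.realPoints A, x = c.ι a + Complex.I • c.ι b := by
  obtain ⟨a, b, rfl⟩ := c.exists_re_im x
  have hx' := hA _ hx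
  rw [c.conj_ι_add_I_smul_ι] at hx'
  have ha : c.ι a ∈ A := by
    have := A.smul_mem (2⁻¹ : ℂ) (A.add_mem hx hx')
    rwa [add_add_sub_cancel, ← two_smul ℂ, smul_smul, inv_mul_cancel₀ two_ne_zero,
      one_smul] at this
  refine ⟨a, ha, b, ?_, rfl⟩
  have := A.smul_mem (-Complex.I) ((A.add_mem_iff_right ha).1 hx)
  rwa [smul_smul, neg_mul, Complex.I_mul_I, neg_neg, one_smul] at this

theorem finrank_realPoints [FiniteDimensional ℝ V] {A : Submodule ℂ W}
    (hA : ∀ x ∈ A, c.conj x ∈ A) :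
    Module.finrank ℝ (c.realPoints A) = Module.finrank ℂ A := by
  let f : (c.realPoints A × c.realPoints A) →ₗ[ℝ] A :=
    (c.ofReIm ∘ₗ (c.realPoints A).subtype.prodMap (c.realPoints A).subtype).codRestrict
      (A.restrictScalars ℝ) fun u => A.add_mem u.1.2 (A.smul_mem _ u.2.2)
  have hf : Function.Bijective f := by
    constructor
    · intro u u' h
      have := c.ofReIm_injective (congrArg Subtype.val h)
      exact Prod.ext (Subtype.ext (congrArg Prod.fst this)) (Subtype.ext (congrArg Prod.snd this))
    · rintro ⟨x, hx⟩
      obtain ⟨a, ha, b, hb, rfl⟩ := exists_mem_realPoints hA hx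
      exact ⟨(⟨a, ha⟩, ⟨b, hb⟩), rfl⟩
  have h := (LinearEquiv.ofBijective f hf).finrank_eq
  rw [Module.finrank_prod, finrank_real_of_complex] at h
  omega

end Complexification

namespace IsPolarizedHodgeStructure

variable {V W : Type*} [AddCommGroup V] [Module ℝ V] [AddCommGroup W] [Module ℂ W]
  {c : Complexification V W} {Q : LinearMap.BilinForm ℝ V} {QC : W →ₗ[ℂ] W →ₗ[ℂ] ℂ} {w : ℕ}
  {A B : ℕ → Submodule ℂ W}

theorem conj_weilFactor {p q : ℕ} (h : Even (p + q)) :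
    starRingEnd ℂ (Complex.I ^ p * (-Complex.I) ^ q) = Complex.I ^ p * (-Complex.I) ^ q := by
  have h' : (-1 : ℂ) ^ p = (-1) ^ q := by
    have h := Nat.even_add.1 h
    by_cases hp : Even p
    · rw [hp.neg_one_pow, (h.1 hp).neg_one_pow]
    · rw [(Nat.not_even_iff_odd.1 hp).neg_one_pow,
        (Nat.not_even_iff_odd.1 (mt h.2 hp)).neg_one_pow]
  have h₂ : (-1 : ℂ) ^ q * (-1) ^ q = 1 := by rw [← mul_pow]; simp
  rw [map_mul, map_pow, map_pow, map_neg, Complex.conj_I, neg_neg, neg_pow, h', neg_pow _ q]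
  ring

theorem weilFactor_ne_zero (p q : ℕ) : Complex.I ^ p * (-Complex.I) ^ q ≠ 0 :=
  mul_ne_zero (pow_ne_zero _ Complex.I_ne_zero) (pow_ne_zero _ (neg_ne_zero.2 Complex.I_ne_zero))

/-- The Hermitian inner product `i^{p-q} Q(y, conj x)` on `V^{p,q}`. -/
@[reducible]
def hodgeCore (h : IsPolarizedHodgeStructure c QC w A) (hw : Even w)
    (hsymm : ∀ x y, QC x y = QC y x)
    (hconj : ∀ x y, QC (c.conj x) (c.conj y) = starRingEnd ℂ (QC x y))
    {p : ℕ} (hp : p ≤ w) : InnerProductSpace.Core ℂ (A p) where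
  inner x y := Complex.I ^ p * (-Complex.I) ^ (w - p) * QC y (c.conj x)
  conj_inner_symm x y := by
    rw [map_mul, conj_weilFactor (by rwa [Nat.add_sub_cancel' hp]), ← hconj, c.conj_conj, hsymm]
  re_inner_nonneg x := by
    by_cases hx : (x : W) = 0
    · simp [hx]
    · obtain ⟨r, hr, h⟩ := h.positivity p x x.2 hx
      rw [h]
      exact hr.le
  add_left x y z := by simp only [Submodule.coe_add, map_add, mul_add]
  smul_left x y r := by
    simp only [Submodule.coe_smul, c.conj_smul, map_smul, smul_eq_mul]
    ring
  definite x hx := by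
    by_contra hne
    obtain ⟨r, hr, h⟩ := h.positivity p x x.2 (fun h0 => hne (Subtype.ext h0))
    rw [hx] at h
    exact hr.ne (by exact_mod_cast h)

theorem real_pos (h : IsPolarizedHodgeStructure c QC w A) (hw : Even w)
    (hQC : ∀ u v : V, QC (c.ι u) (c.ι v) = (Q u v : ℂ)) {u : V} (hu : c.ι u ∈ A (w / 2))
    (hne : u ≠ 0) : 0 < Q u u := by
  obtain ⟨r, hr, h⟩ := h.positivity _ _ hu ((map_ne_zero_iff c.ι c.ι_injective).2 hne)
  rw [show w - w / 2 = w / 2 by obtain ⟨k, rfl⟩ := hw; omega, ← mul_pow, mul_neg,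
    Complex.I_mul_I, neg_neg, one_pow, one_mul, c.conj_ι, hQC] at h
  exact (Complex.ofReal_injective h) ▸ hr

/-- The real inner product `Q` on the real points of the middle Hodge subspace. -/
@[reducible]
def realCore (h : IsPolarizedHodgeStructure c QC w A) (hw : Even w)
    (hQsymm : ∀ u v, Q u v = Q v u) (hQC : ∀ u v : V, QC (c.ι u) (c.ι v) = (Q u v : ℂ)) :
    InnerProductSpace.Core ℝ (c.realPoints (A (w / 2))) where
  inner x y := Q x y
  conj_inner_symm x y := hQsymm _ _
  re_inner_nonneg x := by
    by_cases hx : (x : V) = 0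
    · simp [hx]
    · exact (h.real_pos hw hQC x.2 hx).le
  add_left x y z := by simp
  smul_left x y r := by simp
  definite x hx := by
    by_contra hne
    exact (h.real_pos hw hQC x.2 (fun h0 => hne (Subtype.ext h0))).ne' hx

theorem exists_hermitian_isometry (hA : IsPolarizedHodgeStructure c QC w A)
    (hB : IsPolarizedHodgeStructure c QC w B) [FiniteDimensional ℂ W] (hw : Even w)
    (hsymm : ∀ x y, QC x y = QC y x)
    (hconj : ∀ x y, QC (c.conj x) (c.conj y) = starRingEnd ℂ (QC x y))
    {p : ℕ} (hp : p ≤ w) (hrank : Module.finrank ℂ (A p) = Module.finrank ℂ (B p)) :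
    ∃ f : W →ₗ[ℂ] W, (∀ x ∈ A p, f x ∈ B p) ∧
      ∀ x ∈ A p, ∀ y ∈ A p, QC (f x) (c.conj (f y)) = QC x (c.conj y) := by
  obtain ⟨e, he⟩ := exists_linearEquiv_inner_eq (hA.hodgeCore hw hsymm hconj hp)
    (hB.hodgeCore hw hsymm hconj hp) hrank
  obtain ⟨f, hf⟩ := LinearMap.exists_extend ((B p).subtype ∘ₗ e.toLinearMap)
  have hfe : ∀ x : A p, f x = e x := fun x => LinearMap.congr_fun hf x
  refine ⟨f, fun x hx => hfe ⟨x, hx⟩ ▸ (e ⟨x, hx⟩).2, fun x hx y hy => ?_⟩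
  rw [hfe ⟨x, hx⟩, hfe ⟨y, hy⟩]
  exact mul_left_cancel₀ (weilFactor_ne_zero p (w - p)) (he ⟨y, hy⟩ ⟨x, hx⟩)

theorem conj_mem_middle (h : IsPolarizedHodgeStructure c QC w A) (hw : Even w) {x : W}
    (hx : x ∈ A (w / 2)) : c.conj x ∈ A (w / 2) := by
  have := h.conj_mem _ x hx
  rwa [show w - w / 2 = w / 2 by obtain ⟨k, rfl⟩ := hw; omega] at this

theorem exists_real_isometry (hA : IsPolarizedHodgeStructure c QC w A)
    (hB : IsPolarizedHodgeStructure c QC w B) [FiniteDimensional ℝ V] (hw : Even w)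
    (hQsymm : ∀ u v, Q u v = Q v u) (hQC : ∀ u v : V, QC (c.ι u) (c.ι v) = (Q u v : ℂ))
    (hrank : Module.finrank ℂ (A (w / 2)) = Module.finrank ℂ (B (w / 2)))
    {v : V} (hvA : c.ι v ∈ A (w / 2)) (hvB : c.ι v ∈ B (w / 2)) :
    ∃ f : W →ₗ[ℂ] W, (∀ x ∈ A (w / 2), f x ∈ B (w / 2)) ∧
      (∀ x ∈ A (w / 2), ∀ y ∈ A (w / 2), QC (f x) (c.conj (f y)) = QC x (c.conj y)) ∧
      (∀ x, f (c.conj x) = c.conj (f x)) ∧ f (c.ι v) = c.ι v := by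
  have hcA : ∀ x ∈ A (w / 2), c.conj x ∈ A (w / 2) := fun x hx => hA.conj_mem_middle hw hx
  have hcB : ∀ x ∈ B (w / 2), c.conj x ∈ B (w / 2) := fun x hx => hB.conj_mem_middle hw hx
  obtain ⟨e, he, hev⟩ := exists_linearEquiv_inner_eq_of_apply_eq
    (hA.realCore hw hQsymm hQC) (hB.realCore hw hQsymm hQC)
    (by rw [Complexification.finrank_realPoints hcA, Complexification.finrank_realPoints hcB,
      hrank]) ⟨v, hvA⟩ ⟨v, hvB⟩ rfl
  obtain ⟨g, hg⟩ := LinearMap.exists_extend ((c.realPoints (B (w / 2))).subtype ∘ₗ e.toLinearMap)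
  have hge : ∀ x : c.realPoints (A (w / 2)), g x = e x := fun x => LinearMap.congr_fun hg x
  have hgQ : ∀ a ∈ c.realPoints (A (w / 2)), ∀ b ∈ c.realPoints (A (w / 2)),
      Q (g a) (g b) = Q a b := fun a ha b hb => by
    rw [hge ⟨a, ha⟩, hge ⟨b, hb⟩]
    exact he ⟨a, ha⟩ ⟨b, hb⟩
  have hgB : ∀ a ∈ c.realPoints (A (w / 2)), c.ι (g a) ∈ B (w / 2) := fun a ha =>
    hge ⟨a, ha⟩ ▸ (e ⟨a, ha⟩).2
  obtain ⟨f, hf, hfc⟩ := c.exists_extend g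
  refine ⟨f, fun x hx => ?_, fun x hx y hy => ?_, hfc, ?_⟩
  · obtain ⟨a, ha, b, hb, rfl⟩ := Complexification.exists_mem_realPoints hcA hx
    rw [map_add, map_smul, hf, hf]
    exact add_mem (hgB a ha) (Submodule.smul_mem _ _ (hgB b hb))
  · rw [← hfc]
    obtain ⟨a, ha, b, hb, rfl⟩ := Complexification.exists_mem_realPoints hcA hx
    obtain ⟨a', ha', b', hb', rfl⟩ := Complexification.exists_mem_realPoints hcA hy
    rw [c.conj_ι_add_I_smul_ι]
    simp only [map_add, map_sub, map_smul, LinearMap.add_apply, LinearMap.smul_apply, hf, hQC,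
      hgQ a ha a' ha', hgQ a ha b' hb', hgQ b hb a' ha', hgQ b hb b' hb']
  · rw [hf, hge ⟨v, hvA⟩, hev]

/-- Isometries of the Hodge subspaces glue to a complex isometry defined over `ℝ`. -/
theorem exists_isometry (hA : IsPolarizedHodgeStructure c QC w A)
    (hB : IsPolarizedHodgeStructure c QC w B) [FiniteDimensional ℝ V] (hw : Even w)
    (hQsymm : ∀ u v, Q u v = Q v u) (hQC : ∀ u v : V, QC (c.ι u) (c.ι v) = (Q u v : ℂ))
    (hrank : ∀ p, Module.finrank ℂ (A p) = Module.finrank ℂ (B p))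
    {v : V} (hvA : c.ι v ∈ A (w / 2)) (hvB : c.ι v ∈ B (w / 2)) :
    ∃ F : W →ₗ[ℂ] W, (∀ p, ∀ x ∈ A p, F x ∈ B p) ∧
      (∀ x y, QC (F x) (F y) = QC x y) ∧
      (∀ x, F (c.conj x) = c.conj (F x)) ∧ F (c.ι v) = c.ι v := by
  have := c.finiteDimensional
  have hsymm := Complexification.symm_of_real hQsymm hQC
  have hconj := Complexification.conj_apply_apply_of_real hQC
  have hψ : ∀ p, ∃ f : W →ₗ[ℂ] W, p ≤ w → (∀ x ∈ A p, f x ∈ B p) ∧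
      ∀ x ∈ A p, ∀ y ∈ A p, QC (f x) (c.conj (f y)) = QC x (c.conj y) := fun p => by
    by_cases hp : p ≤ w
    · obtain ⟨f, hf⟩ := hA.exists_hermitian_isometry hB hw hsymm hconj hp (hrank p)
      exact ⟨f, fun _ => hf⟩
    · exact ⟨0, fun h => absurd h hp⟩
  choose ψ hψ using hψ
  obtain ⟨μ, hμB, hμQ, hμc, hμv⟩ := hA.exists_real_isometry hB hw hQsymm hQC (hrank _) hvA hvB
  let φ : ℕ → W →ₗ[ℂ] W := fun p =>
    if p < w / 2 then ψ p else if p = w / 2 then μ else c.conjEnd (ψ (w - p))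
  have hlt : ∀ p, p < w / 2 → φ p = ψ p := fun p hp => if_pos hp
  have hmid : φ (w / 2) = μ := by simp [φ]
  have hgt : ∀ p, w / 2 < p → φ p = c.conjEnd (ψ (w - p)) := fun p hp => by
    simp [φ, hp.not_gt, hp.ne']
  have hw2 : w / 2 + w / 2 = w := by obtain ⟨k, rfl⟩ := hw; omega
  have hφB : ∀ p ≤ w, ∀ x ∈ A p, φ p x ∈ B p := fun p hp x hx => by
    rcases lt_trichotomy p (w / 2) with h | rfl | h
    · exact hlt p h ▸ (hψ p hp).1 x hx
    · exact hmid ▸ hμB x hx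
    · rw [hgt p h]
      have := hB.conj_mem _ _ ((hψ (w - p) (Nat.sub_le _ _)).1 _ (hA.conj_mem _ x hx))
      rwa [Nat.sub_sub_self hp] at this
  have hφc : ∀ p ≤ w, ∀ x, φ (w - p) (c.conj x) = c.conj (φ p x) := fun p hp x => by
    rcases lt_trichotomy p (w / 2) with h | rfl | h
    · rw [hlt p h, hgt (w - p) (by omega), Nat.sub_sub_self hp]
      change c.conj (ψ p (c.conj (c.conj x))) = _
      rw [c.conj_conj]
    · rw [show w - w / 2 = w / 2 by omega, hmid, hμc]
    · rw [hgt p h, hlt (w - p) (by omega)]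
      exact (c.conj_conj _).symm
  have hφQ : ∀ p ≤ w, ∀ x ∈ A p, ∀ y ∈ A p,
      QC (φ p x) (c.conj (φ p y)) = QC x (c.conj y) := fun p hp x hx y hy => by
    rcases lt_trichotomy p (w / 2) with h | rfl | h
    · exact hlt p h ▸ (hψ p hp).2 x hx y hy
    · exact hmid ▸ hμQ x hx y hy
    · rw [hgt p h]
      change QC (c.conj (ψ (w - p) (c.conj x))) (c.conj (c.conj (ψ (w - p) (c.conj y)))) = _
      rw [c.conj_conj, hsymm, (hψ (w - p) (Nat.sub_le _ _)).2 _ (hA.conj_mem _ y hy) _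
        (hA.conj_mem _ x hx), c.conj_conj, hsymm]
  obtain ⟨F, hF⟩ := hA.isInternal.exists_linearMap_eq fun p => φ p
  replace hF : ∀ p ≤ w, ∀ x ∈ A p, F x = φ p x := fun p hp x hx =>
    hF ⟨p, Nat.lt_succ_of_le hp⟩ x hx
  have hind : ∀ P : W → Prop, P 0 → (∀ x y, P x → P y → P (x + y)) →
      (∀ p ≤ w, ∀ x ∈ A p, P x) → ∀ x, P x := fun P h0 hadd hmem x =>
    Submodule.iSup_induction (fun p : Fin (w + 1) => A p) (motive := P)
      (hA.isInternal.submodule_iSup_eq_top ▸ Submodule.mem_top)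
      (fun p y hy => hmem p (Nat.le_of_lt_succ p.2) y hy) h0 hadd
  refine ⟨F, fun p x hx => ?_, fun x y => ?_, fun x => ?_, ?_⟩
  · by_cases hp : p ≤ w
    · exact hF p hp x hx ▸ hφB p hp x hx
    · rw [hA.bot_of_gt p (not_le.1 hp), Submodule.mem_bot] at hx
      rw [hx, map_zero]
      exact zero_mem _
  · refine hind (fun x => ∀ y, QC (F x) (F y) = QC x y) (by simp)
      (fun x x' hx hx' y => by simp [hx, hx']) (fun p hp x hx y => ?_) x y
    refine hind (fun y => QC (F x) (F y) = QC x y) (by simp)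
      (fun y y' hy hy' => by simp [hy, hy']) (fun q hq y hy => ?_) y
    by_cases hpq : p + q = w
    · have hy' := hA.conj_mem q y hy
      obtain rfl : p = w - q := by omega
      have h := hφQ (w - q) hp x hx _ hy'
      rw [← hφc _ hp, Nat.sub_sub_self hq, c.conj_conj] at h
      rw [hF _ hp x hx, hF _ hq y hy, h]
    · rw [hA.isotropic p q hpq x hx y hy, hF p hp x hx, hF q hq y hy]
      exact hB.isotropic p q hpq _ (hφB p hp x hx) _ (hφB q hq y hy)
  · refine hind (fun x => F (c.conj x) = c.conj (F x)) (by simp)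
      (fun x y hx hy => by simp [hx, hy]) (fun p hp x hx => ?_) x
    rw [hF p hp x hx, hF (w - p) (Nat.sub_le _ _) _ (hA.conj_mem p x hx), hφc p hp]
  · rw [hF (w / 2) (Nat.div_le_self _ _) _ hvA, hmid, hμv]

end IsPolarizedHodgeStructure

/-- **Transitivity of `G_v` on the Hodge locus of `v`.** Let `v ∈ V` with `Q(v,v) > 0`.
For any two `Q`-polarized Hodge structures of weight `w` on `V` of the same type for
which `v` lies in `V^{w/2,w/2}`, there is `g ∈ O(V,Q)` with `g v = v` whose `ℂ`-linear
extension maps the Hodge subspaces of the first onto those of the second. -/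
theorem stabilizer_transitive_on_hodge_locus
    {V W : Type*} [AddCommGroup V] [Module ℝ V] [FiniteDimensional ℝ V]
    [AddCommGroup W] [Module ℂ W]
    (c : Complexification V W)
    (Q : LinearMap.BilinForm ℝ V) (hQsymm : ∀ u v, Q u v = Q v u)
    (hQnd : Q.Nondegenerate)
    (QC : W →ₗ[ℂ] W →ₗ[ℂ] ℂ) (hQC : ∀ u v : V, QC (c.ι u) (c.ι v) = (Q u v : ℂ))
    (w : ℕ) (hw : 0 < w) (hweven : Even w)
    (v : V) (hv : 0 < Q v v)
    (Vpq₁ Vpq₂ : ℕ → Submodule ℂ W)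
    (h₁ : IsPolarizedHodgeStructure c QC w Vpq₁)
    (h₂ : IsPolarizedHodgeStructure c QC w Vpq₂)
    (hv₁ : c.ι v ∈ Vpq₁ (w / 2)) (hv₂ : c.ι v ∈ Vpq₂ (w / 2))
    (htype : ∀ p, Module.finrank ℂ (Vpq₁ p) = Module.finrank ℂ (Vpq₂ p)) :
    ∃ (g : V →ₗ[ℝ] V) (gC : W →ₗ[ℂ] W),
      Function.Bijective g ∧
      (∀ u u' : V, Q (g u) (g u') = Q u u') ∧
      g v = v ∧
      (∀ u : V, gC (c.ι u) = c.ι (g u)) ∧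
      (∀ p, Submodule.map gC (Vpq₁ p) = Vpq₂ p) := by
  have := c.finiteDimensional
  obtain ⟨F, hFB, hFQ, hFc, hFv⟩ :=
    h₁.exists_isometry h₂ hweven hQsymm hQC htype hv₁ hv₂
  have hreal : ∀ u, ∃ u', F (c.ι u) = c.ι u' := fun u =>
    c.fixed_eq_range _ (by rw [← hFc, c.conj_ι])
  choose g₀ hg₀ using hreal
  let g : V →ₗ[ℝ] V :=
    { toFun := g₀
      map_add' := fun a b => c.ι_injective (by
        rw [← hg₀, map_add, map_add, map_add, hg₀, hg₀])
      map_smul' := fun r a => c.ι_injective (by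
        rw [← hg₀, RingHom.id_apply, c.ι.map_smul, c.ι.map_smul, ← hg₀]
        exact F.map_smul (r : ℂ) (c.ι a)) }
  have hg : ∀ u, F (c.ι u) = c.ι (g u) := hg₀
  have hgQ : ∀ u u', Q (g u) (g u') = Q u u' := fun u u' =>
    Complex.ofReal_injective (by rw [← hQC, ← hQC, ← hg, ← hg, hFQ])
  have hginj : Function.Injective g := (injective_iff_map_eq_zero g).2 fun u hu =>
    hQnd.1 u fun u' => by rw [← hgQ, hu, map_zero, LinearMap.zero_apply]
  refine ⟨g, F, ⟨hginj, LinearMap.injective_iff_surjective.1 hginj⟩, hgQ,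
    c.ι_injective (by rw [← hg, hFv]), hg, fun p => ?_⟩
  have hinj : Function.Injective F := (injective_iff_map_eq_zero F).2 fun x hx => by
    obtain ⟨a, b, rfl⟩ := c.exists_re_im x
    rw [map_add, map_smul, hg, hg] at hx
    obtain ⟨ha, hb⟩ := c.eq_zero_of_ι_add_I_smul_ι_eq_zero hx
    rw [(map_eq_zero_iff g hginj).1 ha, (map_eq_zero_iff g hginj).1 hb]
    simp
  refine Submodule.eq_of_le_of_finrank_eq (Submodule.map_le_iff_le_comap.2 (hFB p)) ?_
  rw [← htype, ← (Submodule.equivMapOfInjective F hinj _).finrank_eq]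
end
end
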